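/- arXiv:1206.3684 — 2 statements merged into one kernel-verified Lean document; each statement's English description precedes it below -/
import Mathlib

section
/- Let 0 < s < 1. For all n, m ∈ ℕ, ∫_{ℝ²} H_n(x+iy) · conj(H_m(x+iy)) · exp(−(1−s)x² − (1/s − 1)y²) dx dy = δ_{nm} · b_n(s), where δ_{nm} is the Kronecker delta. -/
open Polynomial MeasureTheory Real

/-- The physicists' Hermite polynomials: `H 0 = 1`, `H (n+1) = 2X * H n - (H n)'`. -/
noncomputable def physHermite : ℕ → Polynomial ℝ
  | 0 => 1
  | n + 1 => 2 * Polynomial.X * physHermite n - Polynomial.derivative (physHermite n)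

/-- The normalization constant `b_n(s) = (π√s/(1−s)) (2(1+s)/(1−s))^n n!`. -/
noncomputable def bn (s : ℝ) (n : ℕ) : ℝ :=
  Real.pi * Real.sqrt s / (1 - s) * (2 * (1 + s) / (1 - s)) ^ n * n.factorial

/-!
Fix the weight `w = exp(-a x² - b y²)` on `ℂ` and write `⟨P, Q⟩` for the inner product of two
polynomials in `L²(w)`. Since `P` is holomorphic and `conj Q` antiholomorphic, integrating by parts
in the directions `1` and `i` expresses `⟨P', Q⟩` and `⟨P, Q'⟩` linearly through `⟨zP, Q⟩` and
`⟨P, zQ⟩`. Eliminating `⟨P, zQ⟩` gives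
`⟨2zP, Q⟩ = (1/a + 1/b) ⟨P, Q'⟩ + (1/a - 1/b) ⟨P', Q⟩`.
If `1/a - 1/b = 1`, as for `a = 1 - s` and `b = 1/s - 1`, then the raising operator `P ↦ 2zP - P'`
of the Hermite polynomials is therefore `1/a + 1/b` times the adjoint of differentiation, and
`H_{m+1}' = 2(m+1) H_m` reduces `⟨H_{n+1}, H_{m+1}⟩` to `⟨H_n, H_m⟩`.
-/

/-- The Gaussian weight on `ℂ ≅ ℝ²` whose level sets are the ellipses `a x² + b y² = const`. -/
noncomputable def ellipticGaussian (a b : ℝ) (z : ℂ) : ℝ :=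
  exp (-a * z.re ^ 2 - b * z.im ^ 2)

/-- The function `P(z) conj(Q(z)) exp(-a x² - b y²)` of `z = x + iy`, whose integral is
`gaussianForm a b P Q`. The coefficients of `P` and `Q` lie in any semiring mapping to `ℂ`, so that
real polynomials are covered without changing coefficients. -/
noncomputable def gaussianIntegrand {R : Type*} [CommSemiring R] [Algebra R ℂ] (a b : ℝ)
    (P Q : R[X]) (z : ℂ) : ℂ :=
  aeval z P * starRingEnd ℂ (aeval z Q) * ellipticGaussian a b z

/-- The inner product of `L²(ℂ, exp(-a x² - b y²) dx dy)` on polynomials, in the convention that is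
linear in the first variable. -/
noncomputable def gaussianForm {R : Type*} [CommSemiring R] [Algebra R ℂ] (a b : ℝ)
    (P Q : R[X]) : ℂ :=
  ∫ z, gaussianIntegrand a b P Q z

theorem integrable_norm_pow_mul_exp_neg_mul_sq_norm {E : Type*} [NormedAddCommGroup E]
    [NormedSpace ℝ E] [FiniteDimensional ℝ E] [Nontrivial E] [MeasurableSpace E] [BorelSpace E]
    (μ : Measure E) [μ.IsAddHaarMeasure] {c : ℝ} (hc : 0 < c) (k : ℕ) :
    Integrable (fun x : E => ‖x‖ ^ k * exp (-c * ‖x‖ ^ 2)) μ := by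
  rw [integrable_fun_norm_addHaar μ (f := fun r => r ^ k * exp (-c * r ^ 2))]
  have hexponent : (-1 : ℝ) < (Module.finrank ℝ E - 1 + k : ℕ) :=
    neg_one_lt_zero.trans_le (Nat.cast_nonneg _)
  refine (integrableOn_rpow_mul_exp_neg_mul_sq hc hexponent).congr_fun (fun r _ => ?_)
    measurableSet_Ioi
  simp only [rpow_natCast, smul_eq_mul, pow_add, mul_assoc]

theorem integral_complex_eq_integral_integral {E : Type*} [NormedAddCommGroup E]
    [NormedSpace ℝ E] {f : ℂ → E} (hf : Integrable f) :
    ∫ z, f z = ∫ x : ℝ, ∫ y : ℝ, f (x + y * Complex.I) := by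
  have e := Complex.volume_preserving_equiv_real_prod.symm
  have hf_prod : Integrable (fun p => f (Complex.measurableEquivRealProd.symm p)) :=
    e.integrable_comp_of_integrable hf
  rw [← e.integral_comp Complex.measurableEquivRealProd.symm.measurableEmbedding,
    Measure.volume_eq_prod, integral_prod _ hf_prod]
  simp only [Complex.measurableEquivRealProd_symm_apply, Complex.mk_eq_add_mul_I]

section EllipticGaussian

variable {a b : ℝ}

@[fun_prop]
theorem continuous_ellipticGaussian : Continuous (ellipticGaussian a b) := by
  unfold ellipticGaussian
  fun_prop

theorem ellipticGaussian_le_exp_neg_min_mul_sq_norm (z : ℂ) :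
    ellipticGaussian a b z ≤ exp (-min a b * ‖z‖ ^ 2) := by
  rw [ellipticGaussian, exp_le_exp, Complex.sq_norm, Complex.normSq_apply]
  nlinarith [mul_le_mul_of_nonneg_right (min_le_left a b) (sq_nonneg z.re),
    mul_le_mul_of_nonneg_right (min_le_right a b) (sq_nonneg z.im)]

theorem hasLineDerivAt_ellipticGaussian (z v : ℂ) :
    HasLineDerivAt ℝ (ellipticGaussian a b)
      (-(2 * (a * v.re * z.re + b * v.im * z.im)) * ellipticGaussian a b z) z v := by
  have hre : HasDerivAt (fun t : ℝ => z.re + t * v.re) v.re 0 := by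
    simpa using ((hasDerivAt_id (0 : ℝ)).mul_const v.re).const_add z.re
  have him : HasDerivAt (fun t : ℝ => z.im + t * v.im) v.im 0 := by
    simpa using ((hasDerivAt_id (0 : ℝ)).mul_const v.im).const_add z.im
  have h := (((hre.pow 2).const_mul (-a)).sub ((him.pow 2).const_mul b)).exp
  simp only [HasLineDerivAt, ellipticGaussian, Complex.add_re, Complex.add_im, Complex.real_smul,
    Complex.re_ofReal_mul, Complex.im_ofReal_mul]
  refine h.congr_deriv ?_
  simp only [Pi.pow_apply, neg_mul, Pi.sub_apply, zero_mul, add_zero, Nat.cast_ofNat,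
    Nat.add_one_sub_one, pow_one]
  ring

end EllipticGaussian

section GaussianForm

variable {R : Type*} [CommSemiring R] [Algebra R ℂ] {a b : ℝ}

theorem integrable_gaussianIntegrand (ha : 0 < a) (hb : 0 < b) (P Q : R[X]) :
    Integrable (gaussianIntegrand a b P Q) := by
  induction P using Polynomial.induction_on' with
  | add P₁ P₂ h₁ h₂ =>
    exact (h₁.add h₂).congr (.of_forall fun z => by simp [gaussianIntegrand, add_mul])
  | monomial i r =>
    induction Q using Polynomial.induction_on' with
    | add Q₁ Q₂ h₁ h₂ =>
      exact (h₁.add h₂).congr (.of_forall fun z => by simp [gaussianIntegrand, mul_add, add_mul])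
    | monomial j s =>
      have hdominating := (integrable_norm_pow_mul_exp_neg_mul_sq_norm (volume : Measure ℂ)
        (lt_min ha hb) (i + j)).const_mul (‖algebraMap R ℂ r‖ * ‖algebraMap R ℂ s‖)
      have hcontinuous :
          Continuous (gaussianIntegrand a b (monomial i r) (monomial j s)) := by
        unfold gaussianIntegrand
        fun_prop
      refine hdominating.mono' hcontinuous.aestronglyMeasurable (.of_forall fun z => ?_)
      calc ‖gaussianIntegrand a b (monomial i r) (monomial j s) z‖
          = ‖algebraMap R ℂ r‖ * ‖algebraMap R ℂ s‖ *
              (‖z‖ ^ (i + j) * ellipticGaussian a b z) := by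
            simp only [gaussianIntegrand, aeval_monomial, norm_mul, norm_pow, RCLike.norm_conj,
              Complex.norm_of_nonneg (exp_pos _).le, ellipticGaussian]
            ring
        _ ≤ ‖algebraMap R ℂ r‖ * ‖algebraMap R ℂ s‖ *
              (‖z‖ ^ (i + j) * exp (-min a b * ‖z‖ ^ 2)) := by
            gcongr
            exact ellipticGaussian_le_exp_neg_min_mul_sq_norm z

theorem gaussianForm_sub_left {R : Type*} [CommRing R] [Algebra R ℂ] (ha : 0 < a) (hb : 0 < b)
    (P₁ P₂ Q : R[X]) :
    gaussianForm a b (P₁ - P₂) Q = gaussianForm a b P₁ Q - gaussianForm a b P₂ Q := by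
  rw [gaussianForm, gaussianForm, gaussianForm, ← integral_sub
    (integrable_gaussianIntegrand ha hb P₁ Q) (integrable_gaussianIntegrand ha hb P₂ Q)]
  simp only [gaussianIntegrand, map_sub, sub_mul]

theorem conj_gaussianForm (P Q : R[X]) :
    starRingEnd ℂ (gaussianForm a b P Q) = gaussianForm a b Q P := by
  simp only [gaussianForm, gaussianIntegrand, ← integral_conj, map_mul,
    Complex.conj_conj, Complex.conj_ofReal, mul_comm (starRingEnd ℂ _)]

theorem gaussianForm_C_mul_left (r : R) (P Q : R[X]) :
    gaussianForm a b (C r * P) Q = algebraMap R ℂ r * gaussianForm a b P Q := by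
  simp only [gaussianForm, gaussianIntegrand, map_mul, aeval_C, mul_assoc, integral_const_mul]

theorem gaussianForm_C_mul_right (r : R) (P Q : R[X]) :
    gaussianForm a b P (C r * Q) =
      starRingEnd ℂ (algebraMap R ℂ r) * gaussianForm a b P Q := by
  rw [← conj_gaussianForm, gaussianForm_C_mul_left, map_mul, conj_gaussianForm]

theorem gaussianForm_zero_right (P : R[X]) : gaussianForm a b P 0 = 0 := by
  simp [gaussianForm, gaussianIntegrand]

theorem gaussianForm_eq_integral_integral (ha : 0 < a) (hb : 0 < b) (P Q : R[X]) :
    gaussianForm a b P Q = ∫ x : ℝ, ∫ y : ℝ,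
      aeval ((x : ℂ) + y * Complex.I) P * starRingEnd ℂ (aeval ((x : ℂ) + y * Complex.I) Q) *
        (exp (-a * x ^ 2 - b * y ^ 2) : ℂ) := by
  rw [gaussianForm, integral_complex_eq_integral_integral
    (integrable_gaussianIntegrand ha hb P Q)]
  simp [gaussianIntegrand, ellipticGaussian]

theorem gaussianForm_one_one (ha : 0 < a) (hb : 0 < b) :
    gaussianForm a b (1 : R[X]) 1 = (π / √(a * b) : ℝ) := by
  calc gaussianForm a b (1 : R[X]) 1
      = ((∫ x : ℝ, exp (-a * x ^ 2)) * ∫ y : ℝ, exp (-b * y ^ 2) : ℝ) := by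
        simp only [gaussianForm_eq_integral_integral ha hb, map_one, one_mul, Complex.ofReal_mul,
          ← integral_complex_ofReal, sub_eq_add_neg, exp_add, neg_mul, integral_const_mul,
          integral_mul_const]
    _ = (π / √(a * b) : ℝ) := by
        rw [integral_gaussian, integral_gaussian, sqrt_div pi_pos.le, sqrt_div pi_pos.le,
          div_mul_div_comm, mul_self_sqrt pi_pos.le, sqrt_mul ha.le]

theorem hasLineDerivAt_aeval_mul_conj_aeval (P Q : R[X]) (z v : ℂ) :
    HasLineDerivAt ℝ (fun z : ℂ => aeval z P * starRingEnd ℂ (aeval z Q))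
      (v * (aeval z (derivative P) * starRingEnd ℂ (aeval z Q)) +
        starRingEnd ℂ v * (aeval z P * starRingEnd ℂ (aeval z (derivative Q)))) z v := by
  have hderiv (S : R[X]) :
      HasLineDerivAt ℝ (fun z : ℂ => aeval z S) (v * aeval z (derivative S)) z v := by
    simpa using ((S.hasDerivAt_aeval z).hasFDerivAt.restrictScalars ℝ).hasLineDerivAt v
  have h := HasDerivAt.mul (hderiv P) (hderiv Q).star
  refine HasDerivAt.congr_deriv h ?_
  simp only [zero_smul, add_zero, RCLike.star_def, star_mul']
  ring

theorem integrable_linearCombination_gaussianIntegrand (ha : 0 < a) (hb : 0 < b) (c d : ℂ)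
    (P₁ Q₁ P₂ Q₂ : R[X]) :
    Integrable fun z => c * gaussianIntegrand a b P₁ Q₁ z + d * gaussianIntegrand a b P₂ Q₂ z :=
  ((integrable_gaussianIntegrand ha hb P₁ Q₁).const_mul c).add
    ((integrable_gaussianIntegrand ha hb P₂ Q₂).const_mul d)

theorem integral_linearCombination_gaussianIntegrand (ha : 0 < a) (hb : 0 < b) (c d : ℂ)
    (P₁ Q₁ P₂ Q₂ : R[X]) :
    ∫ z, (c * gaussianIntegrand a b P₁ Q₁ z + d * gaussianIntegrand a b P₂ Q₂ z) =
      c * gaussianForm a b P₁ Q₁ + d * gaussianForm a b P₂ Q₂ := by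
  rw [integral_add ((integrable_gaussianIntegrand ha hb P₁ Q₁).const_mul c)
    ((integrable_gaussianIntegrand ha hb P₂ Q₂).const_mul d), integral_const_mul,
    integral_const_mul, gaussianForm, gaussianForm]

theorem gaussianForm_integral_by_parts (ha : 0 < a) (hb : 0 < b) (P Q : R[X]) (v : ℂ) :
    (a * v.re - b * v.im * Complex.I) * gaussianForm a b (X * P) Q +
        (a * v.re + b * v.im * Complex.I) * gaussianForm a b P (X * Q) =
      v * gaussianForm a b (derivative P) Q +
        starRingEnd ℂ v * gaussianForm a b P (derivative Q) := by
  -- `β` is chosen so that the factor `2 (a v.re x + b v.im y)` produced by differentiating the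
  -- weight along `v` equals `β z + conj (β z)`.
  set β : ℂ := a * v.re - b * v.im * Complex.I with hβ
  set β' : ℂ := a * v.re + b * v.im * Complex.I with hβ'
  have hweight (z : ℂ) : aeval z P * starRingEnd ℂ (aeval z Q) *
      ((-(2 * (a * v.re * z.re + b * v.im * z.im)) * ellipticGaussian a b z : ℝ) : ℂ) =
        -(β * gaussianIntegrand a b (X * P) Q z + β' * gaussianIntegrand a b P (X * Q) z) := by
    have hlinear : ((-(2 * (a * v.re * z.re + b * v.im * z.im)) : ℝ) : ℂ) =
        -(β * z + β' * starRingEnd ℂ z) := by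
      apply Complex.ext <;> simp [hβ, hβ'] <;> ring
    simp only [gaussianIntegrand, map_mul, aeval_X, Complex.ofReal_mul, hlinear]
    ring
  have hpoly (z : ℂ) : (v * (aeval z (derivative P) * starRingEnd ℂ (aeval z Q)) +
      starRingEnd ℂ v * (aeval z P * starRingEnd ℂ (aeval z (derivative Q)))) *
        (ellipticGaussian a b z : ℂ) =
      v * gaussianIntegrand a b (derivative P) Q z +
        starRingEnd ℂ v * gaussianIntegrand a b P (derivative Q) z := by
    simp only [gaussianIntegrand]
    ring
  have hparts := integral_bilinear_hasLineDerivAt_right_eq_neg_left_of_integrable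
    (μ := volume) (B := ContinuousLinearMap.mul ℝ ℂ)
    (by simpa only [ContinuousLinearMap.mul_apply', hpoly] using
      integrable_linearCombination_gaussianIntegrand ha hb ..)
    (by simpa only [ContinuousLinearMap.mul_apply', hweight] using!
      (integrable_linearCombination_gaussianIntegrand ha hb ..).neg)
    (integrable_gaussianIntegrand ha hb P Q)
    (fun z _ => hasLineDerivAt_aeval_mul_conj_aeval P Q z v)
    (fun z _ => (hasLineDerivAt_ellipticGaussian z v).ofReal_comp)
  simp only [ContinuousLinearMap.mul_apply', hpoly, hweight, integral_neg, neg_inj,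
    integral_linearCombination_gaussianIntegrand ha hb] at hparts
  exact hparts

theorem two_mul_gaussianForm_X_mul (ha : 0 < a) (hb : 0 < b) (P Q : R[X]) :
    2 * gaussianForm a b (X * P) Q =
      (a⁻¹ + b⁻¹) * gaussianForm a b P (derivative Q) +
        (a⁻¹ - b⁻¹) * gaussianForm a b (derivative P) Q := by
  have ha' : (a : ℂ) ≠ 0 := by exact_mod_cast ha.ne'
  have hb' : (b : ℂ) ≠ 0 := by exact_mod_cast hb.ne'
  have hre : a * (gaussianForm a b (X * P) Q + gaussianForm a b P (X * Q)) =
      gaussianForm a b (derivative P) Q + gaussianForm a b P (derivative Q) := by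
    simpa [mul_add] using gaussianForm_integral_by_parts ha hb P Q 1
  have him : b * (gaussianForm a b (X * P) Q - gaussianForm a b P (X * Q)) =
      gaussianForm a b P (derivative Q) - gaussianForm a b (derivative P) Q := by
    have h := gaussianForm_integral_by_parts ha hb P Q Complex.I
    simp only [Complex.I_re, Complex.I_im, Complex.conj_I, Complex.ofReal_zero,
      Complex.ofReal_one] at h
    refine mul_left_cancel₀ Complex.I_ne_zero ?_
    linear_combination -h
  push_cast
  field_simp
  linear_combination b * hre + a * him

end GaussianForm

section Hermite

variable {a b : ℝ}

theorem physHermite_succ (n : ℕ) :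
    physHermite (n + 1) = C 2 * (X * physHermite n) - derivative (physHermite n) := by
  rw [physHermite, mul_assoc, C_ofNat]

theorem derivative_physHermite_succ (n : ℕ) :
    derivative (physHermite (n + 1)) = C (2 * (n + 1) : ℝ) * physHermite n := by
  induction n with
  | zero => simp [physHermite, C_ofNat]
  | succ n ih =>
    rw [physHermite_succ, derivative_sub, derivative_C_mul, derivative_mul, ih, derivative_C_mul,
      derivative_X, physHermite_succ n]
    simp only [map_mul, map_add, map_natCast, map_one, Nat.cast_add, Nat.cast_one]
    ring

theorem gaussianForm_physHermite_succ_left (ha : 0 < a) (hb : 0 < b) (hab : a⁻¹ - b⁻¹ = 1)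
    (n : ℕ) (Q : ℝ[X]) :
    gaussianForm a b (physHermite (n + 1)) Q =
      (a⁻¹ + b⁻¹) * gaussianForm a b (physHermite n) (derivative Q) := by
  have hab' : (a⁻¹ - b⁻¹ : ℂ) = 1 := by exact_mod_cast hab
  rw [physHermite_succ, gaussianForm_sub_left ha hb, gaussianForm_C_mul_left, map_ofNat,
    two_mul_gaussianForm_X_mul ha hb, hab']
  ring

theorem gaussianForm_physHermite_succ_zero (ha : 0 < a) (hb : 0 < b) (hab : a⁻¹ - b⁻¹ = 1)
    (n : ℕ) : gaussianForm a b (physHermite (n + 1)) (physHermite 0) = 0 := by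
  rw [gaussianForm_physHermite_succ_left ha hb hab, physHermite, derivative_one,
    gaussianForm_zero_right, mul_zero]

theorem gaussianForm_physHermite_succ_succ (ha : 0 < a) (hb : 0 < b) (hab : a⁻¹ - b⁻¹ = 1)
    (n m : ℕ) :
    gaussianForm a b (physHermite (n + 1)) (physHermite (m + 1)) =
      2 * (a⁻¹ + b⁻¹) * (m + 1) * gaussianForm a b (physHermite n) (physHermite m) := by
  rw [gaussianForm_physHermite_succ_left ha hb hab, derivative_physHermite_succ,
    gaussianForm_C_mul_right, Complex.coe_algebraMap, Complex.conj_ofReal]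
  push_cast
  ring

theorem gaussianForm_physHermite (ha : 0 < a) (hb : 0 < b) (hab : a⁻¹ - b⁻¹ = 1) (n m : ℕ) :
    gaussianForm a b (physHermite n) (physHermite m) =
      if n = m then ((π / √(a * b) * (2 * (a⁻¹ + b⁻¹)) ^ n * n.factorial : ℝ) : ℂ) else 0 := by
  induction n generalizing m with
  | zero =>
    cases m with
    | zero => simpa [physHermite] using gaussianForm_one_one ha hb
    | succ m => simp [← conj_gaussianForm (physHermite (m + 1)),
        gaussianForm_physHermite_succ_zero ha hb hab]
  | succ n ih =>
    cases m with
    | zero => simp [gaussianForm_physHermite_succ_zero ha hb hab]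
    | succ m =>
      rw [gaussianForm_physHermite_succ_succ ha hb hab, ih]
      rcases eq_or_ne n m with rfl | hnm
      · simp only [if_true, Nat.factorial_succ]
        push_cast
        ring
      · simp [hnm]

theorem bn_eq_pi_div_sqrt_mul {s : ℝ} (hs0 : 0 < s) (hs1 : s < 1) (n : ℕ) :
    bn s n = π / √((1 - s) * (1 / s - 1)) * (2 * ((1 - s)⁻¹ + (1 / s - 1)⁻¹)) ^ n *
      n.factorial := by
  have ha : 0 < 1 - s := sub_pos.2 hs1
  have hsqrt : √((1 - s) * (1 / s - 1)) = (1 - s) / √s := by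
    rw [show (1 - s) * (1 / s - 1) = (1 - s) ^ 2 / s by field_simp, sqrt_div (sq_nonneg _),
      sqrt_sq ha.le]
  have hsum : (1 - s)⁻¹ + (1 / s - 1)⁻¹ = (1 + s) / (1 - s) := by
    rw [show 1 / s - 1 = (1 - s) / s by field_simp]
    field_simp
  rw [bn, hsqrt, hsum, div_div_eq_mul_div, ← mul_div_assoc]

end Hermite

theorem complexHermite_orthogonality (s : ℝ) (hs0 : 0 < s) (hs1 : s < 1) (n m : ℕ) :
    (∫ x : ℝ, ∫ y : ℝ,
        Polynomial.aeval ((x : ℂ) + y * Complex.I) (physHermite n) *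
          (starRingEnd ℂ) (Polynomial.aeval ((x : ℂ) + y * Complex.I) (physHermite m)) *
          (Real.exp (-(1 - s) * x ^ 2 - (1 / s - 1) * y ^ 2) : ℂ))
      = if n = m then (bn s n : ℂ) else 0 := by
  have ha : 0 < 1 - s := sub_pos.2 hs1
  have hb : 0 < 1 / s - 1 := sub_pos.2 (one_lt_one_div hs0 hs1)
  have hab : (1 - s)⁻¹ - (1 / s - 1)⁻¹ = 1 := by
    rw [show 1 / s - 1 = (1 - s) / s by field_simp]
    field_simp
  rw [← gaussianForm_eq_integral_integral ha hb, gaussianForm_physHermite ha hb hab,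
    bn_eq_pi_div_sqrt_mul hs0 hs1]
end

section
/- Let 0 < s < 1. For all z, w ∈ ℂ, the series ∑_{n=0}^∞ b_n(s)^{−1} · H_n(z) · conj(H_n(w)) converges, with sum equal to ((1−s²)/(2πs)) · exp( −((1−s)²/(4s))·(z² + conj(w)²) + ((1−s²)/(2s))·z·conj(w) ). -/
open Polynomial Real

/-!
Let `γ = π^(-1/2) exp(-t²) dt`. Differentiating the moment generating function
`∫ exp(zt) dγ(t) = exp(z²/4)` and using the Rodrigues formula for the derivatives of `exp(-z²)`
gives `H_n(y) exp(-y²) = ∫ (2it)^n exp(-2iyt) dγ(t)`. Hence, up to the factor `exp(-x² - y²)`, the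
Mehler series `∑ (u/2)^n H_n(x) H_n(y) / n!` is the termwise integral against `γ × γ` of the
exponential series of `exp(-2utr)`, weighted by `exp(-2ixt - 2iyr)`. Since `2|utr| ≤ |u|(t² + r²)`,
dominated convergence applies for `|u| < 1`, and what remains is a Gaussian integral. The kernel is
the case `u = (1-s)/(1+s)`, `x = z`, `y = conj w`.
-/

section GaussianIntegrals

open MeasureTheory ProbabilityTheory
open scoped NNReal

local notation "cexp" => Complex.exp

lemma ofReal_mul_cpow {r : ℝ} (hr : 0 ≤ r) (z w : ℂ) :
    ((r : ℂ) * z) ^ w = (r : ℂ) ^ w * z ^ w := by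
  rcases eq_or_ne w 0 with rfl | hw
  · simp
  rcases hr.eq_or_lt with rfl | hr
  · simp [hw]
  rcases eq_or_ne z 0 with rfl | hz
  · simp [hw]
  have hr' : (r : ℂ) ≠ 0 := Complex.ofReal_ne_zero.2 hr.ne'
  rw [Complex.cpow_def_of_ne_zero (mul_ne_zero hr' hz), Complex.cpow_def_of_ne_zero hr',
    Complex.cpow_def_of_ne_zero hz, Complex.log_ofReal_mul hr hz, ← Complex.ofReal_log hr.le,
    add_mul, Complex.exp_add]

lemma gaussianPDFReal_smul_cexp_quadratic (v : ℝ≥0) (a b : ℂ) (t : ℝ) :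
    gaussianPDFReal 0 v t • cexp (a * t ^ 2 + b * t) =
      (√(2 * π * v) : ℂ)⁻¹ * cexp ((a - 1 / (2 * v)) * t ^ 2 + b * t) := by
  rw [gaussianPDFReal_def, Complex.real_smul]
  push_cast
  rw [mul_assoc, ← Complex.exp_add]
  ring_nf

variable {v : ℝ≥0} {a : ℂ}

lemma one_sub_two_mul_re_pos (ha : 2 * v * a.re < 1) : 0 < (1 - 2 * v * a).re := by
  simpa [mul_assoc] using ha

lemma pi_div_cpow_one_half (hv : v ≠ 0) (ha : 2 * v * a.re < 1) :
    (π / -(a - 1 / (2 * v)) : ℂ) ^ (1 / 2 : ℂ) =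
      √(2 * π * v) * (1 - 2 * v * a) ^ (-(1 / 2) : ℂ) := by
  have hvC : (v : ℂ) ≠ 0 := by exact_mod_cast hv
  have harg : (1 - 2 * v * a).arg ≠ π := fun h ↦
    (one_sub_two_mul_re_pos ha).not_gt (Complex.arg_eq_pi_iff.1 h).1
  have hbase : (π / -(a - 1 / (2 * v)) : ℂ) = ((2 * π * v : ℝ) : ℂ) * (1 - 2 * v * a)⁻¹ := by
    rw [neg_sub, div_sub' (mul_ne_zero two_ne_zero hvC), div_div_eq_mul_div]
    push_cast
    ring
  rw [hbase, ofReal_mul_cpow (by positivity), Complex.inv_cpow _ _ harg, Complex.cpow_neg,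
    Real.sqrt_eq_rpow, Complex.ofReal_cpow (by positivity)]
  norm_num

lemma integral_cexp_quadratic_gaussianReal (ha : 2 * v * a.re < 1) (b : ℂ) :
    ∫ t : ℝ, cexp (a * t ^ 2 + b * t) ∂gaussianReal 0 v =
      (1 - 2 * v * a) ^ (-(1 / 2) : ℂ) * cexp (v * b ^ 2 / (2 * (1 - 2 * v * a))) := by
  rcases eq_or_ne v 0 with rfl | hv
  · simp
  have hvC : (v : ℂ) ≠ 0 := by exact_mod_cast hv
  have hsqrt : (√(2 * π * v) : ℂ) ≠ 0 := by
    exact_mod_cast (show 0 < √(2 * π * v) by positivity).ne'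
  have hcoef : (a - 1 / (2 * v) : ℂ).re < 0 := by
    have : (a - 1 / (2 * v) : ℂ).re = a.re - 1 / (2 * v) := by
      rw [Complex.sub_re, ← Complex.ofReal_re (1 / (2 * v))]
      push_cast
      rfl
    rw [this, sub_neg, lt_div_iff₀ (by positivity)]
    linarith
  have hexponent : -(b ^ 2 / (4 * (a - 1 / (2 * v)))) = v * b ^ 2 / (2 * (1 - 2 * v * a)) := by
    rw [show (4 * (a - 1 / (2 * v)) : ℂ) = -(2 * (1 - 2 * v * a)) / v by field_simp; ring]
    field_simp
  have hlebesgue := integral_cexp_quadratic hcoef b 0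
  simp only [add_zero, zero_sub] at hlebesgue
  rw [integral_gaussianReal_eq_integral_smul hv]
  simp_rw [gaussianPDFReal_smul_cexp_quadratic]
  rw [integral_const_mul, hlebesgue, pi_div_cpow_one_half hv ha, hexponent,
    mul_assoc (√(2 * π * v) : ℂ), inv_mul_cancel_left₀ hsqrt]

lemma integrable_cexp_quadratic_gaussianReal (ha : 2 * v * a.re < 1) (b : ℂ) :
    Integrable (fun t : ℝ ↦ cexp (a * t ^ 2 + b * t)) (gaussianReal 0 v) := by
  have hne : 1 - 2 * v * a ≠ 0 := Complex.ne_zero_of_re_pos (one_sub_two_mul_re_pos ha)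
  -- A function with nonzero Bochner integral is integrable.
  refine not_imp_comm.1 integral_undef ?_
  rw [integral_cexp_quadratic_gaussianReal ha]
  exact mul_ne_zero (by simp [Complex.cpow_eq_zero_iff, hne]) (Complex.exp_ne_zero _)

lemma integrable_exp_quadratic_gaussianReal {c : ℝ} (hc : 2 * v * c < 1) (b : ℝ) :
    Integrable (fun t : ℝ ↦ rexp (c * t ^ 2 + b * t)) (gaussianReal 0 v) := by
  have h := (integrable_cexp_quadratic_gaussianReal (a := (c : ℂ)) (by simpa using hc) b).norm
  refine h.congr (.of_forall fun t ↦ ?_)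
  simp only [Complex.norm_exp]
  norm_cast

end GaussianIntegrals

section ExponentialSeries

open MeasureTheory
open scoped Nat

local notation "cexp" => Complex.exp

variable {α : Type*} [MeasurableSpace α] {μ : Measure α} {f g : α → ℂ}

lemma integrable_cexp_mul (hf : AEStronglyMeasurable f μ) (hg : AEStronglyMeasurable g μ)
    (hfg : Integrable (fun a ↦ rexp ‖f a‖ * ‖g a‖) μ) :
    Integrable (fun a ↦ cexp (f a) * g a) μ := by
  refine hfg.mono' (by fun_prop) (.of_forall fun a ↦ ?_)
  rw [norm_mul]
  gcongr
  exact Complex.norm_exp_le_exp_norm _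

lemma hasSum_integral_pow_div_factorial_mul (hf : AEStronglyMeasurable f μ)
    (hg : AEStronglyMeasurable g μ) (hfg : Integrable (fun a ↦ rexp ‖f a‖ * ‖g a‖) μ) :
    HasSum (fun n : ℕ ↦ ∫ a, f a ^ n / n ! * g a ∂μ) (∫ a, cexp (f a) * g a ∂μ) := by
  have hbound (a : α) : HasSum (fun n : ℕ ↦ ‖f a‖ ^ n / n ! * ‖g a‖) (rexp ‖f a‖ * ‖g a‖) := by
    rw [Real.exp_eq_exp_ℝ]
    exact (NormedSpace.expSeries_div_hasSum_exp ‖f a‖).mul_right _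
  refine hasSum_integral_of_dominated_convergence (fun n a ↦ ‖f a‖ ^ n / n ! * ‖g a‖)
    (fun n ↦ by fun_prop) (fun n ↦ .of_forall fun a ↦ ?_)
    (.of_forall fun a ↦ (hbound a).summable) ?_ (.of_forall fun a ↦ ?_)
  · simp only [norm_mul, norm_div, norm_pow, Complex.norm_natCast, le_refl]
  · simpa only [(hbound _).tsum_eq] using hfg
  · rw [Complex.exp_eq_exp_ℂ]
    exact (NormedSpace.expSeries_div_hasSum_exp (f a)).mul_right _

end ExponentialSeries

section Mehler

open Complex (I)
open MeasureTheory ProbabilityTheory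
open scoped NNReal Nat

local notation "cexp" => Complex.exp

local notation "γ" => gaussianReal 0 (1 / 2)

lemma iteratedDeriv_cexp_neg_sq (n : ℕ) :
    iteratedDeriv n (fun z : ℂ ↦ cexp (-z ^ 2)) =
      fun z ↦ (-1) ^ n * aeval z (physHermite n) * cexp (-z ^ 2) := by
  induction n with
  | zero => simp [physHermite]
  | succ n ih =>
    ext z
    have hexp : HasDerivAt (fun z : ℂ ↦ cexp (-z ^ 2)) (cexp (-z ^ 2) * -(2 * z)) z := by
      simpa using ((hasDerivAt_id z).pow 2).neg.cexp
    rw [iteratedDeriv_succ, ih,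
      ((((physHermite n).hasDerivAt_aeval z).const_mul ((-1) ^ n)).fun_mul hexp).deriv, physHermite]
    simp only [map_sub, map_mul, aeval_X, map_ofNat]
    ring

lemma complexMGF_id_gaussianReal_half :
    complexMGF id γ = fun z ↦ cexp (-(I / 2 * z) ^ 2) := by
  ext z
  rw [complexMGF_id_gaussianReal, mul_pow, div_pow, Complex.I_sq]
  push_cast
  ring_nf

lemma integral_pow_mul_cexp_gaussianReal (n : ℕ) (y : ℂ) :
    ∫ t : ℝ, (2 * I * t) ^ n * cexp (-2 * I * y * t) ∂γ =
      aeval y (physHermite n) * cexp (-y ^ 2) := by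
  have hmoment := iteratedDeriv_complexMGF (X := id) (μ := γ) (z := -2 * I * y) (by simp) n
  have hy : I / 2 * (-2 * I * y) = y := by linear_combination -y * Complex.I_sq
  have hunit : (2 * I) ^ n * ((I / 2) ^ n * (-1) ^ n) = 1 := by
    rw [← mul_pow, ← mul_pow, show 2 * I * (I / 2 * -1) = 1 by linear_combination -Complex.I_sq,
      one_pow]
  rw [complexMGF_id_gaussianReal_half,
    iteratedDeriv_comp_const_mul (f := fun z ↦ cexp (-z ^ 2)) (by fun_prop),
    iteratedDeriv_cexp_neg_sq] at hmoment
  simp only [hy, id] at hmoment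
  simp_rw [mul_pow _ (Complex.ofReal _), mul_assoc ((2 * I) ^ n), integral_const_mul, ← hmoment]
  linear_combination (aeval y (physHermite n) * cexp (-y ^ 2)) * hunit

lemma integral_pow_mul_cexp_gaussianReal_prod (u x y : ℂ) (n : ℕ) :
    ∫ p : ℝ × ℝ, (-(2 * u * p.1 * p.2)) ^ n / n ! *
        (cexp (-2 * I * x * p.1) * cexp (-2 * I * y * p.2)) ∂Measure.prod γ γ =
      (u / 2) ^ n / n ! * aeval x (physHermite n) * aeval y (physHermite n) *
        (cexp (-x ^ 2) * cexp (-y ^ 2)) := by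
  have hfactor (p : ℝ × ℝ) : (-(2 * u * p.1 * p.2)) ^ n / n ! *
      (cexp (-2 * I * x * p.1) * cexp (-2 * I * y * p.2)) = (u / 2) ^ n / n ! *
      (((2 * I * p.1) ^ n * cexp (-2 * I * x * p.1)) *
        ((2 * I * p.2) ^ n * cexp (-2 * I * y * p.2))) := by
    rw [show -(2 * u * p.1 * p.2) = u / 2 * (2 * I * p.1) * (2 * I * p.2) by
      linear_combination -2 * u * p.1 * p.2 * Complex.I_sq, mul_pow, mul_pow]
    ring
  simp_rw [hfactor]
  rw [integral_const_mul, integral_prod_mul (fun t : ℝ ↦ (2 * I * t) ^ n * cexp (-2 * I * x * t))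
    (fun t : ℝ ↦ (2 * I * t) ^ n * cexp (-2 * I * y * t)), integral_pow_mul_cexp_gaussianReal,
    integral_pow_mul_cexp_gaussianReal]
  ring

lemma norm_neg_two_mul_mul_le (u : ℂ) (r t : ℝ) :
    ‖-(2 * u * r * t)‖ ≤ ‖u‖ * r ^ 2 + ‖u‖ * t ^ 2 :=
  calc ‖-(2 * u * r * t)‖ = ‖u‖ * (2 * |r| * |t|) := by
        simp only [norm_neg, norm_mul, Complex.norm_ofNat, Complex.norm_real, Real.norm_eq_abs]
        ring
    _ ≤ ‖u‖ * (|r| ^ 2 + |t| ^ 2) := by gcongr; exact two_mul_le_add_sq _ _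
    _ = ‖u‖ * r ^ 2 + ‖u‖ * t ^ 2 := by rw [sq_abs, sq_abs, mul_add]

lemma integral_cexp_mul_gaussianReal (u x y : ℂ) (t : ℝ) :
    ∫ r : ℝ, cexp (-(2 * u * t * r)) * (cexp (-2 * I * x * t) * cexp (-2 * I * y * r)) ∂γ =
      cexp (-y ^ 2) * cexp (u ^ 2 * t ^ 2 + 2 * I * (u * y - x) * t) :=
  calc
    _ = ∫ r : ℝ, cexp (-2 * I * x * t) * cexp ((-(2 * u * t) - 2 * I * y) * id r) ∂γ := by
        congr with r
        simp only [← Complex.exp_add, id]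
        ring_nf
    _ = cexp (-2 * I * x * t) * complexMGF id γ (-(2 * u * t) - 2 * I * y) :=
        integral_const_mul _ _
    _ = _ := by
        simp only [complexMGF_id_gaussianReal_half, ← Complex.exp_add]
        congr 1
        linear_combination (-(u * t + I * y) ^ 2 + y ^ 2) * Complex.I_sq

variable {u : ℂ}

lemma integrable_exp_norm_mul_gaussianReal_prod (hu : ‖u‖ < 1) (x y : ℂ) :
    Integrable (fun p : ℝ × ℝ ↦ rexp ‖-(2 * u * p.1 * p.2)‖ *
        ‖cexp (-2 * I * x * p.1) * cexp (-2 * I * y * p.2)‖) (Measure.prod γ γ) := by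
  have hu' : 2 * ((1 / 2 : ℝ≥0) : ℝ) * ‖u‖ < 1 := by simpa using hu
  have hnorm (z : ℂ) (t : ℝ) : ‖cexp (-2 * I * z * t)‖ = rexp (2 * z.im * t) := by
    simp [Complex.norm_exp]
  refine ((integrable_exp_quadratic_gaussianReal hu' (2 * x.im)).mul_prod
    (integrable_exp_quadratic_gaussianReal hu' (2 * y.im))).mono' (by fun_prop)
    (.of_forall fun p ↦ ?_)
  rw [Real.norm_of_nonneg (by positivity), norm_mul, hnorm, hnorm, ← Real.exp_add, ← Real.exp_add,
    ← Real.exp_add, Real.exp_le_exp]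
  linarith [norm_neg_two_mul_mul_le u p.1 p.2]

lemma integral_cexp_mul_gaussianReal_prod (hu : ‖u‖ < 1) (x y : ℂ) :
    ∫ p : ℝ × ℝ, cexp (-(2 * u * p.1 * p.2)) *
        (cexp (-2 * I * x * p.1) * cexp (-2 * I * y * p.2)) ∂Measure.prod γ γ =
      (1 - u ^ 2) ^ (-(1 / 2) : ℂ) *
        cexp ((2 * u * x * y - u ^ 2 * (x ^ 2 + y ^ 2)) / (1 - u ^ 2)) *
          (cexp (-x ^ 2) * cexp (-y ^ 2)) := by
  have hnorm : ‖u ^ 2‖ < 1 := by rw [norm_pow]; exact pow_lt_one₀ (norm_nonneg u) hu two_ne_zero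
  have hne : 1 - u ^ 2 ≠ 0 := fun h ↦ by simp [← sub_eq_zero.1 h] at hnorm
  have hre : 2 * ((1 / 2 : ℝ≥0) : ℝ) * (u ^ 2).re < 1 := by
    simpa using (Complex.re_le_norm _).trans_lt hnorm
  rw [integral_prod _ (integrable_cexp_mul (by fun_prop) (by fun_prop)
    (integrable_exp_norm_mul_gaussianReal_prod hu x y))]
  simp_rw [integral_cexp_mul_gaussianReal]
  have hexponent : -y ^ 2 + (1 / 2 * (2 * I * (u * y - x)) ^ 2) / (2 * (1 - u ^ 2)) =
      (2 * u * x * y - u ^ 2 * (x ^ 2 + y ^ 2)) / (1 - u ^ 2) + (-x ^ 2 + -y ^ 2) := by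
    field_simp
    linear_combination (u * y - x) ^ 2 * Complex.I_sq
  have hvar : (((1 / 2 : ℝ≥0) : ℝ) : ℂ) = 1 / 2 := by norm_num
  rw [integral_const_mul, integral_cexp_quadratic_gaussianReal hre, hvar,
    mul_one_div_cancel two_ne_zero, one_mul, mul_left_comm, ← Complex.exp_add, hexponent,
    Complex.exp_add, Complex.exp_add]
  exact (mul_assoc _ _ _).symm

theorem hasSum_mehler_kernel (hu : ‖u‖ < 1) (x y : ℂ) :
    HasSum (fun n : ℕ ↦ (u / 2) ^ n / n ! * aeval x (physHermite n) * aeval y (physHermite n))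
      ((1 - u ^ 2) ^ (-(1 / 2) : ℂ) *
        cexp ((2 * u * x * y - u ^ 2 * (x ^ 2 + y ^ 2)) / (1 - u ^ 2))) := by
  have h := hasSum_integral_pow_div_factorial_mul
    (by fun_prop) (by fun_prop) (integrable_exp_norm_mul_gaussianReal_prod hu x y)
  simp_rw [integral_pow_mul_cexp_gaussianReal_prod, integral_cexp_mul_gaussianReal_prod hu] at h
  exact (hasSum_mul_right_iff (mul_ne_zero (Complex.exp_ne_zero _) (Complex.exp_ne_zero _))).1 h

end Mehler

section Normalization

/-- The parameter `u = (1 - s) / (1 + s)` for which the weights `1 / b_n(s)` are proportional to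
the weights `(u / 2) ^ n / n!` of Mehler's formula. -/
noncomputable def mehlerRatio (s : ℝ) : ℝ := (1 - s) / (1 + s)

lemma inv_bn (s : ℝ) (n : ℕ) :
    (bn s n)⁻¹ = (1 - s) / (π * √s) * ((mehlerRatio s / 2) ^ n / n.factorial) := by
  have : mehlerRatio s / 2 = (2 * (1 + s) / (1 - s))⁻¹ := by
    rw [mehlerRatio, inv_div, div_div, mul_comm (1 + s)]
  rw [bn, this, mul_inv, mul_inv, inv_div, inv_pow]
  ring

variable {s : ℝ}

lemma one_sub_mehlerRatio_sq (hs : 1 + s ≠ 0) : 1 - mehlerRatio s ^ 2 = 4 * s / (1 + s) ^ 2 := by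
  rw [mehlerRatio]
  field_simp
  ring

lemma abs_mehlerRatio_lt_one (hs : 0 < s) : |mehlerRatio s| < 1 := by
  rw [← sq_lt_one_iff_abs_lt_one, ← sub_pos, one_sub_mehlerRatio_sq (by positivity)]
  positivity

lemma one_sub_mehlerRatio_sq_cpow (hs : 0 < s) :
    (1 - (mehlerRatio s : ℂ) ^ 2) ^ (-(1 / 2) : ℂ) = ((1 + s) / (2 * √s) : ℝ) := by
  have hsq : 1 - mehlerRatio s ^ 2 = (2 * √s / (1 + s)) ^ 2 := by
    rw [one_sub_mehlerRatio_sq (by positivity), div_pow, mul_pow, Real.sq_sqrt hs.le]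
    norm_num
  have hcast : (1 - (mehlerRatio s : ℂ) ^ 2) ^ (-(1 / 2) : ℂ) =
      ((1 - mehlerRatio s ^ 2) ^ (-(1 / 2) : ℝ) : ℝ) := by
    rw [Complex.ofReal_cpow (hsq ▸ sq_nonneg _)]
    norm_num
  rw [hcast, hsq, Real.rpow_neg (sq_nonneg _), ← Real.sqrt_eq_rpow, Real.sqrt_sq (by positivity),
    inv_div]

lemma mehler_prefactor (hs : 0 < s) :
    (1 - s) / (π * √s) * ((1 + s) / (2 * √s)) = (1 - s ^ 2) / (2 * π * s) := by
  rw [div_mul_div_comm, show π * √s * (2 * √s) = 2 * π * √s ^ 2 by ring, Real.sq_sqrt hs.le]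
  ring

lemma mehler_exponent (hs : 0 < s) (z w : ℂ) :
    (2 * mehlerRatio s * z * w - mehlerRatio s ^ 2 * (z ^ 2 + w ^ 2)) / (1 - mehlerRatio s ^ 2) =
      -((s - 1) ^ 2 / (4 * s) : ℝ) * (z ^ 2 + w ^ 2) + ((1 - s ^ 2) / (2 * s) : ℝ) * (z * w) := by
  have hs0 : (s : ℂ) ≠ 0 := by exact_mod_cast hs.ne'
  have hs1 : (1 + s : ℂ) ≠ 0 := by exact_mod_cast (add_pos one_pos hs).ne'
  have hden : 1 - (mehlerRatio s : ℂ) ^ 2 = 4 * s / (1 + s) ^ 2 := by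
    exact_mod_cast congrArg Complex.ofReal (one_sub_mehlerRatio_sq (add_pos one_pos hs).ne')
  rw [hden, mehlerRatio]
  push_cast
  field_simp
  ring

end Normalization

theorem hermite_kernel_sum_general (s : ℝ) (hs0 : 0 < s) (_hs1 : s ≠ 1) (z w : ℂ) :
    HasSum
      (fun n : ℕ => ((bn s n : ℂ))⁻¹ * Polynomial.aeval z (physHermite n) *
        (starRingEnd ℂ) (Polynomial.aeval w (physHermite n)))
      (((1 - s ^ 2) / (2 * Real.pi * s) : ℝ) *
        Complex.exp (-(((s - 1) ^ 2 / (4 * s) : ℝ)) * (z ^ 2 + (starRingEnd ℂ) w ^ 2) +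
          (((1 - s ^ 2) / (2 * s) : ℝ)) * (z * (starRingEnd ℂ) w))) := by
  have hu : ‖(mehlerRatio s : ℂ)‖ < 1 := by
    simpa only [Complex.norm_real, Real.norm_eq_abs] using abs_mehlerRatio_lt_one hs0
  have h := (hasSum_mehler_kernel hu z (starRingEnd ℂ w)).mul_left (((1 - s) / (π * √s) : ℝ) : ℂ)
  rw [one_sub_mehlerRatio_sq_cpow hs0, mehler_exponent hs0, ← mul_assoc, ← Complex.ofReal_mul,
    mehler_prefactor hs0] at h
  refine h.congr_fun fun n ↦ ?_
  rw [← Polynomial.aeval_conj, ← Complex.ofReal_inv, inv_bn]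
  push_cast
  ring

theorem hermite_kernel_sum (s : ℝ) (hs0 : 0 < s) (hs1 : s < 1) (z w : ℂ) :
    HasSum
      (fun n : ℕ => ((bn s n : ℂ))⁻¹ * Polynomial.aeval z (physHermite n) *
        (starRingEnd ℂ) (Polynomial.aeval w (physHermite n)))
      (((1 - s ^ 2) / (2 * Real.pi * s) : ℝ) *
        Complex.exp (-(((s - 1) ^ 2 / (4 * s) : ℝ)) * (z ^ 2 + (starRingEnd ℂ) w ^ 2) +
          (((1 - s ^ 2) / (2 * s) : ℝ)) * (z * (starRingEnd ℂ) w))) :=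
  hermite_kernel_sum_general s hs0 hs1.ne z w
end
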